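/- Let f : R^n -> R be twice continuously differentiable with all second-order partial derivatives bounded, and let U and W be independent centered Gaussian vectors in R^n with covariance matrices Σ̃ = (σ̃_{ij}) and Σ = (σ_{ij}) respectively. Then |E f(W) - E f(U)| <= (1/2) L_2 * sum_{i,j} |σ_{ij} - σ̃_{ij}|, where L_2 bounds all mixed second partials of f. -/

import Mathlib

open MeasureTheory ProbabilityTheory Finset

/-!
Interpolate between `U` and `W` by rotations: for independent `U`, `W` the vector
`cos θ • U + sin θ • W` is the path `√(1 - t) • U + √t • W` with `t = sin² θ`, and its velocity
`-sin θ • U + cos θ • W` has no singularity at the endpoints. Gaussian integration by parts turns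
the `θ`-derivative of `E f(cos θ • U + sin θ • W)` into `sin θ cos θ` times the difference of the
covariances contracted with `E D²f`, and `sin θ cos θ` integrates to `1 / 2` over `[0, π / 2]`.
-/

local notation "ρ" => ContinuousLinearMap.rotation

section LinearGrowth

variable {E F : Type*} [NormedAddCommGroup E] [NormedSpace ℝ E]
  [NormedAddCommGroup F] [NormedSpace ℝ F]

lemma norm_le_add_of_forall_norm_fderiv_le {H : E → F} (hH : Differentiable ℝ H) {C : ℝ} {x : E}
    (hC : ∀ y, ‖y‖ ≤ ‖x‖ → ‖fderiv ℝ H y‖ ≤ C) :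
    ‖H x‖ ≤ ‖H 0‖ + C * ‖x‖ := by
  have hmean := (convex_closedBall (0 : E) ‖x‖).norm_image_sub_le_of_norm_fderiv_le (y := x)
    (fun y _ ↦ hH y) (fun y hy ↦ hC y (mem_closedBall_zero_iff.1 hy))
    (Metric.mem_closedBall_self (norm_nonneg x)) (by simp)
  rw [sub_zero] at hmean
  linarith [norm_le_norm_add_norm_sub (H 0) (H x), norm_sub_rev (H 0) (H x)]

variable {Ω : Type*} [MeasurableSpace Ω] {P : Measure Ω} [IsFiniteMeasure P]

lemma integrable_comp_of_norm_fderiv_le_mul_one_add_norm {H : E → F} (hH : Differentiable ℝ H)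
    {C : ℝ} (hC : ∀ x, ‖fderiv ℝ H x‖ ≤ C * (1 + ‖x‖)) {X : Ω → E} (hX : MemLp X 2 P) :
    Integrable (fun ω ↦ H (X ω)) P := by
  have hX₁ : Integrable (fun ω ↦ ‖X ω‖) P := (hX.integrable one_le_two).norm
  have hX₂ : Integrable (fun ω ↦ ‖X ω‖ ^ 2) P := hX.integrable_norm_pow two_ne_zero
  refine ((integrable_const ‖H 0‖).add ((hX₁.add hX₂).const_mul C)).mono'
    (hH.continuous.comp_aestronglyMeasurable hX.aestronglyMeasurable) (ae_of_all _ fun ω ↦ ?_)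
  have hC₀ : 0 ≤ C := by simpa using (norm_nonneg _).trans (hC 0)
  calc ‖H (X ω)‖ ≤ ‖H 0‖ + C * (1 + ‖X ω‖) * ‖X ω‖ :=
        norm_le_add_of_forall_norm_fderiv_le hH fun y hy ↦ (hC y).trans (by gcongr)
    _ = ‖H 0‖ + C * (‖X ω‖ + ‖X ω‖ ^ 2) := by ring

end LinearGrowth

section Rotation

variable {E F : Type*} [NormedAddCommGroup E] [NormedSpace ℝ E]
  [NormedAddCommGroup F] [NormedSpace ℝ F]

lemma hasDerivAt_rotation (p : E × E) (θ : ℝ) :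
    HasDerivAt (fun θ ↦ ρ θ p) ((ρ θ p).2, -(ρ θ p).1) θ := by
  simp only [ContinuousLinearMap.rotation_apply]
  have hfst := ((Real.hasDerivAt_cos θ).smul_const p.1).add
    ((Real.hasDerivAt_sin θ).smul_const p.2)
  have hsnd := ((Real.hasDerivAt_sin θ).neg.smul_const p.1).add
    ((Real.hasDerivAt_cos θ).smul_const p.2)
  refine (hfst.prodMk hsnd).congr_deriv ?_
  simp only [neg_add, neg_smul]

lemma norm_rotation_apply_le (θ : ℝ) (p : E × E) : ‖ρ θ p‖ ≤ 2 * ‖p‖ := by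
  have hcomb {a b : ℝ} (ha : |a| ≤ 1) (hb : |b| ≤ 1) : ‖a • p.1 + b • p.2‖ ≤ 2 * ‖p‖ :=
    calc ‖a • p.1 + b • p.2‖ ≤ |a| * ‖p.1‖ + |b| * ‖p.2‖ := by
          simpa only [norm_smul, Real.norm_eq_abs] using norm_add_le (a • p.1) (b • p.2)
      _ ≤ 1 * ‖p‖ + 1 * ‖p‖ := by gcongr; exacts [norm_fst_le p, norm_snd_le p]
      _ = 2 * ‖p‖ := by ring
  rw [ContinuousLinearMap.rotation_apply]
  exact max_le (hcomb (Real.abs_cos_le_one θ) (Real.abs_sin_le_one θ))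
    (hcomb ((abs_neg _).trans_le (Real.abs_sin_le_one θ)) (Real.abs_cos_le_one θ))

variable [MeasurableSpace E] [BorelSpace E] [SecondCountableTopology E]
  {P : Measure (E × E)} [IsFiniteMeasure P]

theorem hasDerivAt_integral_comp_rotation {H : E × E → F} (hH : ContDiff ℝ 1 H) {C : ℝ}
    (hC : ∀ q, ‖fderiv ℝ H q‖ ≤ C * (1 + ‖q‖)) (hP : MemLp id 2 P) (θ : ℝ) :
    HasDerivAt (fun θ ↦ ∫ p, H (ρ θ p) ∂P)
      (∫ p, fderiv ℝ H (ρ θ p) ((ρ θ p).2, -(ρ θ p).1) ∂P) θ := by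
  have hC₀ : 0 ≤ C := by simpa using (norm_nonneg _).trans (hC 0)
  have hdiff : Differentiable ℝ H := hH.differentiable one_ne_zero
  have hfderiv : Continuous (fderiv ℝ H) := hH.continuous_fderiv one_ne_zero
  have hrot (θ : ℝ) : MemLp (ρ θ) 2 P :=
    hP.of_le_mul (by fun_prop) (ae_of_all _ (norm_rotation_apply_le θ))
  have hP₁ : Integrable (fun p ↦ ‖p‖) P := (hP.integrable one_le_two).norm
  have hP₂ : Integrable (fun p ↦ ‖p‖ ^ 2) P := hP.integrable_norm_pow two_ne_zero
  have hbound (θ : ℝ) (p : E × E) :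
      ‖fderiv ℝ H (ρ θ p) ((ρ θ p).2, -(ρ θ p).1)‖ ≤ C * (2 * ‖p‖ + 4 * ‖p‖ ^ 2) :=
    calc _ ≤ ‖fderiv ℝ H (ρ θ p)‖ * ‖((ρ θ p).2, -(ρ θ p).1)‖ :=
          ContinuousLinearMap.le_opNorm _ _
      _ ≤ C * (1 + ‖ρ θ p‖) * ‖ρ θ p‖ := by
          gcongr
          · exact hC _
          · simp [Prod.norm_def, max_comm]
      _ ≤ C * (1 + 2 * ‖p‖) * (2 * ‖p‖) := by gcongr <;> exact norm_rotation_apply_le θ p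
      _ = C * (2 * ‖p‖ + 4 * ‖p‖ ^ 2) := by ring
  refine (hasDerivAt_integral_of_dominated_loc_of_deriv_le Filter.univ_mem
    (.of_forall fun θ ↦ (hdiff.continuous.comp (ρ θ).continuous).aestronglyMeasurable)
    (integrable_comp_of_norm_fderiv_le_mul_one_add_norm hdiff hC (hrot _))
    (Continuous.aestronglyMeasurable ?_) (ae_of_all _ fun p θ _ ↦ hbound θ p)
    (((hP₁.const_mul 2).add (hP₂.const_mul 4)).const_mul C)
    (ae_of_all _ fun p θ _ ↦ ?_)).2
  · have hrotcont := (ρ θ : E × E →L[ℝ] E × E).continuous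
    exact (hfderiv.comp hrotcont).clm_apply (hrotcont.snd.prodMk hrotcont.fst.neg)
  · exact (hdiff _).hasFDerivAt.comp_hasDerivAt θ (hasDerivAt_rotation p θ)

end Rotation

section Stein

variable {E F : Type*} [NormedAddCommGroup E] [NormedSpace ℝ E]
  [NormedAddCommGroup F] [NormedSpace ℝ F]

lemma fderiv_apply_prod {G : E → E →L[ℝ] F} (hG : Differentiable ℝ G) (q v : E × E) :
    fderiv ℝ (fun q ↦ G q.1 q.2) q v = fderiv ℝ G q.1 v.1 q.2 + G q.1 v.2 := by
  have hfst : HasFDerivAt (fun q : E × E ↦ G q.1) _ q :=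
    (hG q.1).hasFDerivAt.comp q hasFDerivAt_fst
  rw [(hfst.clm_apply hasFDerivAt_snd).fderiv]
  simp [add_comm]

lemma norm_fderiv_apply_prod_le {G : E → E →L[ℝ] F} (hG : Differentiable ℝ G) {M : ℝ}
    (hM : ∀ x, ‖fderiv ℝ G x‖ ≤ M) (q : E × E) :
    ‖fderiv ℝ (fun q ↦ G q.1 q.2) q‖ ≤ (‖G 0‖ + 2 * M) * (1 + ‖q‖) := by
  have hM₀ : 0 ≤ M := (norm_nonneg (fderiv ℝ G 0)).trans (hM 0)
  refine ContinuousLinearMap.opNorm_le_bound _ (by positivity) fun v ↦ ?_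
  rw [fderiv_apply_prod hG]
  have hsecond : ‖fderiv ℝ G q.1 v.1 q.2‖ ≤ M * ‖v‖ * ‖q‖ :=
    ((fderiv ℝ G q.1).le_opNorm₂ _ _).trans <| by
      gcongr
      exacts [hM _, norm_fst_le v, norm_snd_le q]
  have hfirst : ‖G q.1 v.2‖ ≤ (‖G 0‖ + M * ‖q‖) * ‖v‖ :=
    ((G q.1).le_opNorm _).trans <| by
      gcongr
      · exact (norm_le_add_of_forall_norm_fderiv_le hG fun y _ ↦ hM y).trans
          (by gcongr; exact norm_fst_le q)
      · exact norm_snd_le v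
  calc _ ≤ M * ‖v‖ * ‖q‖ + (‖G 0‖ + M * ‖q‖) * ‖v‖ := norm_add_le_of_le hsecond hfirst
    _ = (‖G 0‖ + 2 * M * ‖q‖) * ‖v‖ := by ring
    _ ≤ (‖G 0‖ + 2 * M) * (1 + ‖q‖) * ‖v‖ := by
      gcongr
      nlinarith [norm_nonneg (G 0), norm_nonneg q]

variable [MeasurableSpace E] [BorelSpace E] [SecondCountableTopology E] [CompleteSpace E]
  {μ : Measure E} [IsGaussian μ]

/-- Stein's identity: rotating `(x, y)` does not change `∫∫ G x y dμ dμ`, and the identity says that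
its derivative along the rotation vanishes. -/
theorem integral_apply_self_eq_integral_fderiv (hμ : ∫ x, x ∂μ = 0) {G : E → E →L[ℝ] F}
    (hG : ContDiff ℝ 1 G) {M : ℝ} (hM : ∀ x, ‖fderiv ℝ G x‖ ≤ M) :
    ∫ x, G x x ∂μ = ∫ x, ∫ y, fderiv ℝ G x y y ∂μ ∂μ := by
  have hdiff : Differentiable ℝ G := hG.differentiable one_ne_zero
  set H : E × E → F := fun q ↦ G q.1 q.2 with hH
  have hHdiff : ContDiff ℝ 1 H := (hG.comp contDiff_fst).clm_apply contDiff_snd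
  have hHC := norm_fderiv_apply_prod_le hdiff hM
  have hP : MemLp id 2 (μ.prod μ) := IsGaussian.memLp_two_id
  have hconst (θ : ℝ) : ∫ p, H (ρ θ p) ∂μ.prod μ = ∫ p, H p ∂μ.prod μ := by
    rw [← integral_map (by fun_prop) hHdiff.continuous.aestronglyMeasurable,
      IsGaussian.map_rotation_eq_self hμ]
  have hzero : ∫ p : E × E, (fderiv ℝ G p.1 p.2 p.2 - G p.1 p.1) ∂μ.prod μ = 0 := by
    have hderiv := hasDerivAt_integral_comp_rotation hHdiff hHC hP 0
    simp only [hconst] at hderiv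
    simpa [hH, fderiv_apply_prod hdiff, ContinuousLinearMap.rotation_apply, sub_eq_add_neg]
      using hderiv.unique (hasDerivAt_const 0 _)
  have hint₁ : Integrable (fun p : E × E ↦ G p.1 p.1) (μ.prod μ) :=
    integrable_comp_of_norm_fderiv_le_mul_one_add_norm (hHdiff.differentiable one_ne_zero) hHC
      (((ContinuousLinearMap.fst ℝ E E).prod (.fst ℝ E E)).comp_memLp' hP)
  have hint₂ : Integrable (fun p : E × E ↦ fderiv ℝ G p.1 p.2 p.2) (μ.prod μ) := by
    have hsnd : Integrable (fun p : E × E ↦ ‖p.2‖ ^ 2) (μ.prod μ) :=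
      ((ContinuousLinearMap.snd ℝ E E).comp_memLp' hP).integrable_norm_pow two_ne_zero
    have hcont : Continuous fun p : E × E ↦ fderiv ℝ G p.1 p.2 p.2 :=
      (((hG.continuous_fderiv one_ne_zero).comp continuous_fst).clm_apply continuous_snd).clm_apply
        continuous_snd
    refine (hsnd.const_mul M).mono' hcont.aestronglyMeasurable (ae_of_all _ fun p ↦ ?_)
    refine ((fderiv ℝ G p.1).le_of_opNorm₂_le_of_le (hM p.1) le_rfl le_rfl).trans_eq (by ring)
  rw [integral_sub hint₂ hint₁, sub_eq_zero, integral_prod _ hint₂] at hzero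
  rw [hzero, integral_fun_fst (fun x ↦ G x x), probReal_univ, one_smul]

end Stein

section Interpolation

variable {E F : Type*} [NormedAddCommGroup E] [NormedSpace ℝ E]
  [NormedAddCommGroup F] [NormedSpace ℝ F]

lemma integral_fderiv_clm_comp_apply {D : Type*} [NormedAddCommGroup D] [NormedSpace ℝ D]
    [MeasurableSpace D] [BorelSpace D] [SecondCountableTopology D] [CompleteSpace D]
    {P : Measure D} [IsGaussian P] (hP : ∫ p, p ∂P = 0) {f : E → F} (hf : ContDiff ℝ 2 f) {M : ℝ}
    (hM : ∀ x, ‖fderiv ℝ (fderiv ℝ f) x‖ ≤ M) (A B : D →L[ℝ] E) :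
    ∫ p, fderiv ℝ f (A p) (B p) ∂P
      = ∫ p, ∫ q, fderiv ℝ (fderiv ℝ f) (A p) (A q) (B q) ∂P ∂P := by
  have hf' : ContDiff ℝ 1 (fderiv ℝ f) := hf.fderiv_right (by norm_num)
  set G : D → D →L[ℝ] F := fun p ↦ (fderiv ℝ f (A p)).comp B
  have hfderiv (p : D) : HasFDerivAt G
      (((ContinuousLinearMap.compL ℝ D E F).flip B).comp
        ((fderiv ℝ (fderiv ℝ f) (A p)).comp A)) p :=
    ((ContinuousLinearMap.compL ℝ D E F).flip B).hasFDerivAt.comp p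
      ((hf'.differentiable one_ne_zero _).hasFDerivAt.comp p A.hasFDerivAt)
  have hbound (p : D) : ‖fderiv ℝ G p‖ ≤ M * ‖A‖ * ‖B‖ := by
    have hM₀ : 0 ≤ M := (norm_nonneg (fderiv ℝ (fderiv ℝ f) 0)).trans (hM 0)
    refine ContinuousLinearMap.opNorm_le_bound₂ _ (by positivity) fun u v ↦ ?_
    rw [(hfderiv p).fderiv]
    calc ‖fderiv ℝ (fderiv ℝ f) (A p) (A u) (B v)‖ ≤ M * (‖A‖ * ‖u‖) * (‖B‖ * ‖v‖) :=
          ContinuousLinearMap.le_of_opNorm₂_le_of_le _ (hM _) (A.le_opNorm u) (B.le_opNorm v)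
      _ = M * ‖A‖ * ‖B‖ * ‖u‖ * ‖v‖ := by ring
  have hstein := integral_apply_self_eq_integral_fderiv hP (G := G)
    ((hf'.comp A.contDiff).clm_comp contDiff_const) hbound
  simp only [(hfderiv _).fderiv] at hstein
  exact hstein

variable [MeasurableSpace E] [SecondCountableTopology E] [CompleteSpace E] [CompleteSpace F]
  {μ ν : Measure E}

lemma integral_bilin_rotation [IsProbabilityMeasure μ] [IsProbabilityMeasure ν]
    (hμ : MemLp id 2 μ) (hν : MemLp id 2 ν) (hμ₀ : ∫ x, x ∂μ = 0) (B : E →L[ℝ] E →L[ℝ] F) (θ : ℝ) :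
    ∫ q, B (ρ θ q).1 (ρ θ q).2 ∂μ.prod ν
      = (Real.sin θ * Real.cos θ) • (∫ y, B y y ∂ν - ∫ x, B x x ∂μ) := by
  have hμ₁ := hμ.integrable one_le_two
  have hν₁ := hν.integrable one_le_two
  have hfst : MemLp (fun q : E × E ↦ q.1) 2 (μ.prod ν) := hμ.comp_fst ν
  have hsnd : MemLp (fun q : E × E ↦ q.2) 2 (μ.prod ν) := hν.comp_snd μ
  have hxx := memLp_one_iff_integrable.1 (B.memLp_of_bilin 1 hfst hfst)
  have hyy := memLp_one_iff_integrable.1 (B.memLp_of_bilin 1 hsnd hsnd)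
  have hxy := memLp_one_iff_integrable.1 (B.memLp_of_bilin 1 hfst hsnd)
  have hyx := memLp_one_iff_integrable.1 (B.memLp_of_bilin 1 hsnd hfst)
  have hxy₀ : ∫ q : E × E, B q.1 q.2 ∂μ.prod ν = 0 := by
    simpa [hμ₀] using integral_prod_bilin (f := id) (g := id) B hμ₁ hν₁
  have hyx₀ : ∫ q : E × E, B q.2 q.1 ∂μ.prod ν = 0 := by
    simpa [hμ₀] using integral_prod_bilin (f := id) (g := id) B.flip hμ₁ hν₁
  have hexpand (q : E × E) : B (ρ θ q).1 (ρ θ q).2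
      = (Real.sin θ * Real.cos θ) • (B q.2 q.2 - B q.1 q.1)
        + (Real.cos θ ^ 2 • B q.1 q.2 - Real.sin θ ^ 2 • B q.2 q.1) := by
    simp only [ContinuousLinearMap.rotation_apply, map_add, map_smul, add_apply, smul_apply]
    module
  calc ∫ q, B (ρ θ q).1 (ρ θ q).2 ∂μ.prod ν
      = ∫ q : E × E, (Real.sin θ * Real.cos θ) • (B q.2 q.2 - B q.1 q.1) ∂μ.prod ν
        + ∫ q : E × E, (Real.cos θ ^ 2 • B q.1 q.2 - Real.sin θ ^ 2 • B q.2 q.1) ∂μ.prod ν := by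
        simp only [hexpand]
        exact integral_add ((hyy.sub hxx).smul _) ((hxy.smul _).sub (hyx.smul _))
    _ = (Real.sin θ * Real.cos θ) • (∫ y, B y y ∂ν - ∫ x, B x x ∂μ) := by
        rw [integral_sub (hxy.fun_smul _) (hyx.fun_smul _), integral_smul, integral_smul,
          integral_smul, integral_sub hyy hxx, hxy₀, hyx₀, integral_fun_snd (fun y ↦ B y y),
          integral_fun_fst (fun x ↦ B x x)]
        simp

variable [BorelSpace E] [IsGaussian μ] [IsGaussian ν]

lemma integral_id_prod_eq_zero (hμ : ∫ x, x ∂μ = 0) (hν : ∫ x, x ∂ν = 0) :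
    ∫ p, p ∂μ.prod ν = 0 := by
  have hid : Integrable id (μ.prod ν) := IsGaussian.integrable_id
  refine Prod.ext ?_ ?_
  · simpa [integral_fun_fst (fun x : E ↦ x), hμ] using fst_integral hid
  · simpa [integral_fun_snd (fun x : E ↦ x), hν] using snd_integral hid

theorem hasDerivAt_integral_comp_rotation_fst (hμ : ∫ x, x ∂μ = 0) (hν : ∫ x, x ∂ν = 0)
    {f : E → F} (hf : ContDiff ℝ 2 f) {M : ℝ} (hM : ∀ x, ‖fderiv ℝ (fderiv ℝ f) x‖ ≤ M) (θ : ℝ) :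
    HasDerivAt (fun θ ↦ ∫ p, f (ρ θ p).1 ∂μ.prod ν)
      ((Real.sin θ * Real.cos θ) • ∫ p, (∫ y, fderiv ℝ (fderiv ℝ f) (ρ θ p).1 y y ∂ν
        - ∫ x, fderiv ℝ (fderiv ℝ f) (ρ θ p).1 x x ∂μ) ∂μ.prod ν) θ := by
  have hf' : ContDiff ℝ 1 (fderiv ℝ f) := hf.fderiv_right (by norm_num)
  have hfderiv (q : E × E) : fderiv ℝ (fun q : E × E ↦ f q.1) q
      = (fderiv ℝ f q.1).comp (.fst ℝ E E) :=
    ((hf.differentiable two_ne_zero _).hasFDerivAt.comp q hasFDerivAt_fst).fderiv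
  have hgrowth (q : E × E) : ‖fderiv ℝ (fun q : E × E ↦ f q.1) q‖
      ≤ (‖fderiv ℝ f 0‖ + M) * (1 + ‖q‖) := by
    have hM₀ : 0 ≤ M := (norm_nonneg (fderiv ℝ (fderiv ℝ f) 0)).trans (hM 0)
    rw [hfderiv]
    calc _ ≤ ‖fderiv ℝ f q.1‖ * 1 := (ContinuousLinearMap.opNorm_comp_le _ _).trans
          (by gcongr; exact ContinuousLinearMap.norm_fst_le ℝ E E)
      _ ≤ ‖fderiv ℝ f 0‖ + M * ‖q‖ := by
          rw [mul_one]
          exact (norm_le_add_of_forall_norm_fderiv_le (hf'.differentiable one_ne_zero)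
            fun y _ ↦ hM y).trans (by gcongr; exact norm_fst_le q)
      _ ≤ (‖fderiv ℝ f 0‖ + M) * (1 + ‖q‖) := by
          nlinarith [norm_nonneg (fderiv ℝ f 0), norm_nonneg q]
  convert hasDerivAt_integral_comp_rotation (H := fun q ↦ f q.1)
    ((hf.of_le one_le_two).comp contDiff_fst) hgrowth
    (IsGaussian.memLp_two_id (μ := μ.prod ν)) θ using 1
  simp only [hfderiv]
  have hstein := integral_fderiv_clm_comp_apply (integral_id_prod_eq_zero hμ hν) hf hM
    ((ContinuousLinearMap.fst ℝ E E).comp (ρ θ)) ((ContinuousLinearMap.snd ℝ E E).comp (ρ θ))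
  refine Eq.trans ?_ hstein.symm
  rw [← integral_smul]
  exact integral_congr_ae (ae_of_all _ fun p ↦ (integral_bilin_rotation
    IsGaussian.memLp_two_id IsGaussian.memLp_two_id hμ _ θ).symm)

theorem norm_integral_sub_integral_le_of_norm_integral_fderiv_fderiv_le
    (hμ : ∫ x, x ∂μ = 0) (hν : ∫ x, x ∂ν = 0) {f : E → F} (hf : ContDiff ℝ 2 f)
    {M : ℝ} (hM : ∀ x, ‖fderiv ℝ (fderiv ℝ f) x‖ ≤ M) {K : ℝ}
    (hK : ∀ z, ‖∫ y, fderiv ℝ (fderiv ℝ f) z y y ∂ν - ∫ x, fderiv ℝ (fderiv ℝ f) z x x ∂μ‖ ≤ K) :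
    ‖∫ y, f y ∂ν - ∫ x, f x ∂μ‖ ≤ K / 2 := by
  set φ : ℝ → F := fun θ ↦ ∫ p, f (ρ θ p).1 ∂μ.prod ν with hφ
  have hderiv := hasDerivAt_integral_comp_rotation_fst hμ hν hf hM
  have hφ₀ : φ 0 = ∫ x, f x ∂μ := by
    simp [hφ, ContinuousLinearMap.rotation_apply, integral_fun_fst]
  have hφ₁ : φ (Real.pi / 2) = ∫ y, f y ∂ν := by
    simp [hφ, ContinuousLinearMap.rotation_apply, integral_fun_snd]
  have hbarrier (θ : ℝ) : HasDerivAt (fun θ ↦ K / 2 * Real.sin θ ^ 2)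
      (Real.sin θ * Real.cos θ * K) θ :=
    (((Real.hasDerivAt_sin θ).pow 2).const_mul (K / 2)).congr_deriv (by push_cast; ring)
  have hslope {θ : ℝ} (hθ : θ ∈ Set.Ico 0 (Real.pi / 2)) :
      ‖deriv φ θ‖ ≤ Real.sin θ * Real.cos θ * K := by
    have hsin : 0 ≤ Real.sin θ := Real.sin_nonneg_of_mem_Icc ⟨hθ.1, by linarith [hθ.2, hθ.1]⟩
    have hcos : 0 ≤ Real.cos θ := Real.cos_nonneg_of_mem_Icc ⟨by linarith [hθ.2, hθ.1], hθ.2.le⟩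
    rw [(hderiv θ).deriv, norm_smul, Real.norm_of_nonneg (by positivity)]
    gcongr
    simpa using norm_integral_le_of_norm_le_const (μ := μ.prod ν) (ae_of_all _ fun p ↦ hK _)
  have hle := image_norm_le_of_norm_deriv_right_le_deriv_boundary
    (f := fun θ ↦ φ θ - φ 0) (a := 0) (b := Real.pi / 2)
    (fun θ _ ↦ ((hderiv θ).continuousAt.sub continuousAt_const).continuousWithinAt)
    (fun θ _ ↦ ((hderiv θ).differentiableAt.hasDerivAt.sub_const _).hasDerivWithinAt)
    (by simp) hbarrier (fun θ hθ ↦ hslope hθ) (Set.right_mem_Icc.2 (by positivity))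
  simpa [hφ₀, hφ₁] using hle

end Interpolation

section Coordinates

variable {ι F : Type*} [Fintype ι] [NormedAddCommGroup F] [NormedSpace ℝ F]

lemma norm_sum_smul_sub_sum_smul_le {S T : ι → ι → ℝ} {b : ι → ι → F} {L : ℝ}
    (hb : ∀ i j, ‖b i j‖ ≤ L) :
    ‖∑ i, ∑ j, S i j • b i j - ∑ i, ∑ j, T i j • b i j‖ ≤ L * ∑ i, ∑ j, |S i j - T i j| := by
  simp only [← sum_sub_distrib, ← sub_smul, mul_sum]
  refine norm_sum_le_of_le _ fun i _ ↦ norm_sum_le_of_le _ fun j _ ↦ ?_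
  rw [norm_smul, Real.norm_eq_abs, mul_comm]
  gcongr
  exact hb i j

variable [DecidableEq ι]

lemma bilin_apply_eq_sum (B : (ι → ℝ) →L[ℝ] (ι → ℝ) →L[ℝ] F) (v w : ι → ℝ) :
    B v w = ∑ i, ∑ j, (v i * w j) • B (Pi.single i 1) (Pi.single j 1) := by
  conv_lhs => rw [pi_eq_sum_univ' v, pi_eq_sum_univ' w]
  simp only [map_sum, map_smul, _root_.sum_apply, smul_apply, smul_sum, smul_smul]
  rw [sum_comm]
  simp only [mul_comm]

lemma opNorm_bilin_le_sum (B : (ι → ℝ) →L[ℝ] (ι → ℝ) →L[ℝ] F) :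
    ‖B‖ ≤ ∑ i, ∑ j, ‖B (Pi.single i 1) (Pi.single j 1)‖ := by
  refine B.opNorm_le_bound₂ (by positivity) fun v w ↦ ?_
  rw [bilin_apply_eq_sum B v w, mul_assoc, sum_mul]
  refine norm_sum_le_of_le _ fun i _ ↦ ?_
  rw [sum_mul]
  refine norm_sum_le_of_le _ fun j _ ↦ ?_
  rw [norm_smul, norm_mul, mul_comm]
  gcongr
  exacts [norm_le_pi_norm v i, norm_le_pi_norm w j]

variable [CompleteSpace F] {Ω : Type*} [MeasurableSpace Ω] {P : Measure Ω}

lemma integral_bilin_eq_sum {U : ι → Ω → ℝ} (hU : ∀ i, MemLp (U i) 2 P)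
    (B : (ι → ℝ) →L[ℝ] (ι → ℝ) →L[ℝ] F) :
    ∫ ω, B (U · ω) (U · ω) ∂P
      = ∑ i, ∑ j, (∫ ω, U i ω * U j ω ∂P) • B (Pi.single i 1) (Pi.single j 1) := by
  have hint (i j : ι) :
      Integrable (fun ω ↦ (U i ω * U j ω) • B (Pi.single i 1) (Pi.single j 1)) P :=
    ((hU i).integrable_mul (hU j)).smul_const _
  rw [integral_congr_ae (ae_of_all _ fun ω ↦ bilin_apply_eq_sum B (U · ω) (U · ω)),
    integral_finsetSum _ fun i _ ↦ integrable_finsetSum _ fun j _ ↦ hint i j]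
  refine sum_congr rfl fun i _ ↦ ?_
  rw [integral_finsetSum _ fun j _ ↦ hint i j]
  exact sum_congr rfl fun j _ ↦ integral_smul_const _ _

end Coordinates

section GaussianLaw

variable {ι Ω : Type*} [Fintype ι] [MeasurableSpace Ω] {P : Measure Ω} {U : ι → Ω → ℝ}
  {v : (ι → ℝ) → NNReal}

lemma aemeasurable_of_map_sum_eq_gaussianReal {m : (ι → ℝ) → ℝ}
    (h : ∀ t : ι → ℝ, P.map (fun ω ↦ ∑ i, t i * U i ω) = gaussianReal (m t) (v t)) :
    AEMeasurable (fun ω i ↦ U i ω) P := by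
  classical
  refine aemeasurable_pi_lambda _ fun i ↦ ?_
  have hi : P.map (U i) = gaussianReal (m (Pi.single i 1)) (v (Pi.single i 1)) := by
    simpa [Pi.single_apply] using h (Pi.single i 1)
  have : NeZero (P.map (U i)) := by rw [hi]; infer_instance
  exact aemeasurable_of_map_neZero this

theorem hasGaussianLaw_of_map_sum_eq_gaussianReal {m : (ι → ℝ) → ℝ}
    (h : ∀ t : ι → ℝ, P.map (fun ω ↦ ∑ i, t i * U i ω) = gaussianReal (m t) (v t)) :
    HasGaussianLaw (fun ω i ↦ U i ω) P := by
  classical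
  have hU := aemeasurable_of_map_sum_eq_gaussianReal h
  refine ⟨isGaussian_of_map_eq_gaussianReal fun L ↦
    ⟨m fun i ↦ L (Pi.single i 1), v fun i ↦ L (Pi.single i 1), ?_⟩⟩
  rw [AEMeasurable.map_map_of_aemeasurable (by fun_prop) hU, ← h]
  congr 1
  ext ω
  rw [Function.comp_apply, pi_eq_sum_univ' (U · ω), map_sum]
  simp [mul_comm]

theorem integral_eq_zero_of_map_sum_eq_gaussianReal
    (h : ∀ t : ι → ℝ, P.map (fun ω ↦ ∑ i, t i * U i ω) = gaussianReal 0 (v t)) (i : ι) :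
    ∫ ω, U i ω ∂P = 0 := by
  classical
  have hi : P.map (U i) = gaussianReal 0 (v (Pi.single i 1)) := by
    simpa [Pi.single_apply] using h (Pi.single i 1)
  have hU := (hasGaussianLaw_of_map_sum_eq_gaussianReal h).eval i
  rw [← integral_id_gaussianReal (μ := 0), ← hi, integral_map hU.aemeasurable (by fun_prop)]

lemma integral_map_pi_eq_zero (hU : HasGaussianLaw (fun ω i ↦ U i ω) P)
    (hU₀ : ∀ i, ∫ ω, U i ω ∂P = 0) : ∫ x, x ∂P.map (fun ω i ↦ U i ω) = 0 := by
  rw [integral_map hU.aemeasurable (by fun_prop)]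
  ext i
  rw [eval_integral fun i ↦ (hU.eval i).integrable, hU₀ i, Pi.zero_apply]

end GaussianLaw

theorem gaussian_comparison_general {Ω Ω' : Type*} [MeasurableSpace Ω] [MeasurableSpace Ω']
    {P : Measure Ω} {P' : Measure Ω'} {ι F : Type*} [Fintype ι] [DecidableEq ι]
    [NormedAddCommGroup F] [NormedSpace ℝ F] [CompleteSpace F] {U : ι → Ω → ℝ} {W : ι → Ω' → ℝ}
    (hU : HasGaussianLaw (fun ω i ↦ U i ω) P) (hW : HasGaussianLaw (fun ω i ↦ W i ω) P')
    (hU₀ : ∀ i, ∫ ω, U i ω ∂P = 0) (hW₀ : ∀ i, ∫ ω, W i ω ∂P' = 0) {St S : Matrix ι ι ℝ}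
    (hSt : ∀ i j, St i j = ∫ ω, U i ω * U j ω ∂P) (hS : ∀ i j, S i j = ∫ ω, W i ω * W j ω ∂P')
    {f : (ι → ℝ) → F} (hf : ContDiff ℝ 2 f) {L₂ : ℝ}
    (hL₂ : ∀ x i j, ‖iteratedFDeriv ℝ 2 f x ![Pi.single i 1, Pi.single j 1]‖ ≤ L₂) :
    ‖∫ ω, f (W · ω) ∂P' - ∫ ω, f (U · ω) ∂P‖ ≤ 1 / 2 * L₂ * ∑ i, ∑ j, |S i j - St i j| := by
  have := hU.isGaussian_map
  have := hW.isGaussian_map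
  have hentry (x : ι → ℝ) (i j : ι) :
      ‖fderiv ℝ (fderiv ℝ f) x (Pi.single i 1) (Pi.single j 1)‖ ≤ L₂ := by
    simpa [iteratedFDeriv_two_apply] using hL₂ x i j
  have hbound (x : ι → ℝ) : ‖fderiv ℝ (fderiv ℝ f) x‖ ≤ ∑ _i : ι, ∑ _j : ι, L₂ :=
    (opNorm_bilin_le_sum _).trans (by gcongr; exact hentry _ _ _)
  have hcmp := norm_integral_sub_integral_le_of_norm_integral_fderiv_fderiv_le
    (integral_map_pi_eq_zero hU hU₀) (integral_map_pi_eq_zero hW hW₀) hf hbound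
    (K := L₂ * ∑ i, ∑ j, |S i j - St i j|) fun x ↦ by
      rw [integral_map hW.aemeasurable (by fun_prop), integral_map hU.aemeasurable (by fun_prop),
        integral_bilin_eq_sum fun i ↦ (hW.eval i).memLp_two,
        integral_bilin_eq_sum fun i ↦ (hU.eval i).memLp_two]
      simp only [← hS, ← hSt]
      exact norm_sum_smul_sub_sum_smul_le (hentry x)
  rw [integral_map hW.aemeasurable hf.continuous.aestronglyMeasurable,
    integral_map hU.aemeasurable hf.continuous.aestronglyMeasurable] at hcmp
  exact hcmp.trans_eq (by ring)

/-- **Gaussian comparison via interpolation.**  If `U` and `W` are independent centered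
Gaussian vectors with covariance matrices `St` and `S` respectively, and `f` is twice
continuously differentiable with all second order partial derivatives (including mixed ones)
bounded by `L₂`, then `|E f(W) - E f(U)| ≤ (1/2) L₂ ∑_{i,j} |Sᵢⱼ - Stᵢⱼ|`. -/
theorem gaussian_comparison
    {Ω : Type*} [MeasureSpace Ω] [IsProbabilityMeasure (ℙ : Measure Ω)]
    {n : ℕ} (U W : Fin n → Ω → ℝ)
    (hUm : ∀ i, Measurable (U i)) (hWm : ∀ i, Measurable (W i))
    (hindep : IndepFun (fun ω i => U i ω) (fun ω i => W i ω) ℙ)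
    (St S : Matrix (Fin n) (Fin n) ℝ)
    (hSt : ∀ i j, St i j = ∫ ω, U i ω * U j ω ∂ℙ)
    (hS : ∀ i j, S i j = ∫ ω, W i ω * W j ω ∂ℙ)
    (hUgauss : ∀ t : Fin n → ℝ,
      Measure.map (fun ω => ∑ i, t i * U i ω) ℙ
        = gaussianReal 0 (∑ i, ∑ j, t i * St i j * t j).toNNReal)
    (hWgauss : ∀ t : Fin n → ℝ,
      Measure.map (fun ω => ∑ i, t i * W i ω) ℙ
        = gaussianReal 0 (∑ i, ∑ j, t i * S i j * t j).toNNReal)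
    (f : (Fin n → ℝ) → ℝ) (hf : ContDiff ℝ 2 f) (L₂ : ℝ)
    (hL2 : ∀ (x : Fin n → ℝ) (i j : Fin n),
      |iteratedFDeriv ℝ 2 f x ![Pi.single i 1, Pi.single j 1]| ≤ L₂) :
    |(∫ ω, f (fun i => W i ω) ∂ℙ) - ∫ ω, f (fun i => U i ω) ∂ℙ|
      ≤ (1 / 2) * L₂ * ∑ i, ∑ j, |S i j - St i j| :=
  gaussian_comparison_general (hasGaussianLaw_of_map_sum_eq_gaussianReal hUgauss)
    (hasGaussianLaw_of_map_sum_eq_gaussianReal hWgauss)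
    (integral_eq_zero_of_map_sum_eq_gaussianReal hUgauss)
    (integral_eq_zero_of_map_sum_eq_gaussianReal hWgauss) hSt hS hf hL2
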